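/- Let 0 < α < 1, t > 0 and x > 0. Then for every integer k ≥ 0 one has a_k(x,t) > 0. -/

import Mathlib

open Real MeasureTheory

/-- The Mittag-Leffler function `E_α(r) = ∑ r^k / Γ(1+kα)`. -/
noncomputable def mittagLeffler (α r : ℝ) : ℝ :=
  ∑' k : ℕ, r ^ k / Real.Gamma (1 + k * α)

/-- The coefficients `a_k(x,t)` obtained by splitting the Fourier integral of the
fundamental solution over the intervals where `cos (xξ)` has a fixed sign. -/
noncomputable def aCoeff (α t x : ℝ) (k : ℕ) : ℝ :=
  if k = 0 then
    ∫ ξ in (0 : ℝ)..(π / (2 * x)),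
      mittagLeffler α ((1 - ξ ^ 2) * t ^ α) * Real.cos (x * ξ)
  else
    (-1 : ℝ) ^ k *
      ∫ ξ in (π * (2 * (k : ℝ) - 1) / (2 * x))..(π * (2 * (k : ℝ) + 1) / (2 * x)),
        mittagLeffler α ((1 - ξ ^ 2) * t ^ α) * Real.cos (x * ξ)

open Set Filter Topology

theorem exp_neg_mul_rpow_le_Gamma {M y : ℝ} (hM : 0 ≤ M) (hy : 0 ≤ y) :
    Real.exp (-M) * M ^ y ≤ Real.Gamma (1 + y) := by
  have h_int : IntegrableOn (fun x : ℝ => Real.exp (-x) * x ^ (1 + y - 1)) (Ioi 0) :=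
    Real.GammaIntegral_convergent (by linarith)
  rw [Real.Gamma_eq_integral (by linarith), ← integral_exp_neg_Ioi, ← integral_mul_const]
  calc ∫ x in Ioi M, Real.exp (-x) * M ^ y
      ≤ ∫ x in Ioi M, Real.exp (-x) * x ^ (1 + y - 1) := by
        refine setIntegral_mono_on ((integrableOn_exp_neg_Ioi M).mul_const _)
          (h_int.mono_set (Ioi_subset_Ioi hM)) measurableSet_Ioi fun x hx => ?_
        rw [add_sub_cancel_left]
        have : M ≤ x := le_of_lt hx
        gcongr
    _ ≤ ∫ x in Ioi 0, Real.exp (-x) * x ^ (1 + y - 1) := by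
        refine setIntegral_mono_set h_int ?_ (Ioi_subset_Ioi hM).eventuallyLE
        refine (ae_restrict_iff' measurableSet_Ioi).2 (ae_of_all _ fun x hx => ?_)
        have : 0 < x := hx
        simp only [Pi.zero_apply]
        positivity

theorem Gamma_one_add_nat_mul_pos {α : ℝ} (hα : 0 < α) (k : ℕ) :
    0 < Real.Gamma (1 + k * α) :=
  Real.Gamma_pos_of_pos (by positivity)

theorem summable_mittagLeffler {α : ℝ} (hα : 0 < α) (r : ℝ) :
    Summable fun k : ℕ => r ^ k / Real.Gamma (1 + k * α) := by
  set B : ℝ := 2 * |r| + 1 with hB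
  have hB0 : 0 < B := by positivity
  set M : ℝ := B ^ α⁻¹ with hM
  have hM0 : 0 < M := by positivity
  have hMα : M ^ α = B := by rw [hM, Real.rpow_inv_rpow hB0.le hα.ne']
  refine Summable.of_norm_bounded
    (g := fun k : ℕ => Real.exp M * (1 / 2 : ℝ) ^ k)
    ((summable_geometric_of_lt_one (by norm_num) (by norm_num)).mul_left _) fun k => ?_
  have hΓ := exp_neg_mul_rpow_le_Gamma hM0.le (by positivity : 0 ≤ (k : ℝ) * α)
  rw [mul_comm (k : ℝ) α, Real.rpow_mul hM0.le, hMα, Real.rpow_natCast, mul_comm α] at hΓ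
  rw [norm_div, norm_pow, Real.norm_eq_abs, Real.norm_eq_abs,
    abs_of_pos (Gamma_one_add_nat_mul_pos hα k), div_le_iff₀ (Gamma_one_add_nat_mul_pos hα k)]
  calc |r| ^ k ≤ (1 / 2 * B) ^ k := by
        gcongr
        rw [hB]
        linarith
    _ = Real.exp M * (1 / 2 : ℝ) ^ k * (Real.exp (-M) * B ^ k) := by
        rw [Real.exp_neg, mul_pow]
        field_simp
    _ ≤ _ := by gcongr

theorem hasSum_mittagLeffler {α : ℝ} (hα : 0 < α) (r : ℝ) :
    HasSum (fun k : ℕ => r ^ k / Real.Gamma (1 + k * α)) (mittagLeffler α r) :=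
  (summable_mittagLeffler hα r).hasSum

theorem mittagLeffler_zero (α : ℝ) : mittagLeffler α 0 = 1 := by
  unfold mittagLeffler
  rw [tsum_eq_single 0 fun k hk => by simp [hk]]
  simp

theorem continuous_mittagLeffler {α : ℝ} (hα : 0 < α) : Continuous (mittagLeffler α) := by
  refine continuous_iff_continuousAt.2 fun r => ?_
  have hball : ContinuousOn (mittagLeffler α) (Metric.ball 0 (|r| + 1)) := by
    refine continuousOn_tsum (fun k => by fun_prop) (summable_mittagLeffler hα (|r| + 1))
      fun k s hs => ?_
    rw [mem_ball_zero_iff, Real.norm_eq_abs] at hs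
    have := Gamma_one_add_nat_mul_pos hα k
    rw [norm_div, norm_pow, Real.norm_eq_abs, Real.norm_eq_abs, abs_of_pos this]
    gcongr
  exact hball.continuousAt (Metric.isOpen_ball.mem_nhds (by simp))

theorem integral_sub_rpow_mul_rpow {α β t : ℝ} (hα : 0 < α) (hβ : 0 < β) (ht : 0 < t) :
    ∫ s in (0 : ℝ)..t, (t - s) ^ (α - 1) * s ^ (β - 1) =
      t ^ (β + α - 1) * (Real.Gamma β * Real.Gamma α / Real.Gamma (β + α)) := by
  have h := Complex.betaIntegral_scaled (β : ℂ) (α : ℂ) ht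
  rw [Complex.betaIntegral_eq_Gamma_mul_div _ _ (by simpa) (by simpa)] at h
  have hcongr : ∫ s in (0 : ℝ)..t, (s : ℂ) ^ ((β : ℂ) - 1) * ((t : ℂ) - s) ^ ((α : ℂ) - 1) =
      ∫ s in (0 : ℝ)..t, (((t - s) ^ (α - 1) * s ^ (β - 1) : ℝ) : ℂ) := by
    refine intervalIntegral.integral_congr fun s hs => ?_
    rw [uIcc_of_le ht.le] at hs
    have h1 : 0 ≤ t - s := sub_nonneg.2 hs.2
    push_cast [Complex.ofReal_cpow hs.1, Complex.ofReal_cpow h1]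
    ring
  rw [hcongr, intervalIntegral.integral_ofReal] at h
  apply Complex.ofReal_injective
  rw [h]
  push_cast [Complex.ofReal_cpow ht.le, ← Complex.Gamma_ofReal]
  rfl

theorem intervalIntegrable_sub_rpow {α : ℝ} (hα : 0 < α) (t a b : ℝ) :
    IntervalIntegrable (fun s => (t - s) ^ (α - 1)) volume a b := by
  have := (intervalIntegral.intervalIntegrable_rpow' (r := α - 1) (by linarith)
    (a := t - a) (b := t - b)).comp_sub_left t
  simpa using this

/-- The Volterra integral equation satisfied by `t ↦ E_α(-t^α)`. -/
theorem integral_sub_rpow_mul_mittagLeffler {α t : ℝ} (hα : 0 < α) (ht : 0 < t) :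
    ∫ s in (0 : ℝ)..t, (t - s) ^ (α - 1) * mittagLeffler α (-s ^ α) =
      Real.Gamma α * (1 - mittagLeffler α (-t ^ α)) := by
  have hsum : HasSum
      (fun k : ℕ => ∫ s in (0 : ℝ)..t,
        (t - s) ^ (α - 1) * ((-s ^ α) ^ k / Real.Gamma (1 + k * α)))
      (∫ s in (0 : ℝ)..t, (t - s) ^ (α - 1) * mittagLeffler α (-s ^ α)) := by
    refine intervalIntegral.hasSum_integral_of_dominated_convergence
      (fun k s => (t - s) ^ (α - 1) * ((t ^ α) ^ k / Real.Gamma (1 + k * α))) ?_ ?_ ?_ ?_ ?_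
    · intro k
      exact Measurable.aestronglyMeasurable (by fun_prop)
    · refine fun k => ae_of_all _ fun s hs => ?_
      rw [uIoc_of_le ht.le] at hs
      have h0 : 0 ≤ t - s := sub_nonneg.2 hs.2
      have hs0 : 0 ≤ s := hs.1.le
      have hst : s ≤ t := hs.2
      have hΓ := Gamma_one_add_nat_mul_pos hα k
      rw [norm_mul, norm_div, norm_pow, norm_neg, Real.norm_of_nonneg (by positivity),
        Real.norm_of_nonneg (by positivity), Real.norm_of_nonneg hΓ.le]
      gcongr
    · exact ae_of_all _ fun s _ => (summable_mittagLeffler hα _).mul_left _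
    · simp_rw [tsum_mul_left]
      exact (intervalIntegrable_sub_rpow hα t 0 t).mul_const _
    · exact ae_of_all _ fun s _ => (hasSum_mittagLeffler hα _).mul_left _
  have hterm : ∀ k : ℕ, ∫ s in (0 : ℝ)..t,
      (t - s) ^ (α - 1) * ((-s ^ α) ^ k / Real.Gamma (1 + k * α)) =
      -Real.Gamma α * ((-t ^ α) ^ (k + 1) / Real.Gamma (1 + (k + 1 : ℕ) * α)) := by
    intro k
    have hΓ := Gamma_one_add_nat_mul_pos hα k
    have hpow : ∀ s : ℝ, 0 ≤ s → ∀ n : ℕ, (-s ^ α) ^ n = (-1) ^ n * s ^ ((n : ℝ) * α) := by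
      intro s hs n
      rw [neg_pow, mul_comm (n : ℝ), Real.rpow_mul hs, Real.rpow_natCast]
    have hcongr : ∫ s in (0 : ℝ)..t,
        (t - s) ^ (α - 1) * ((-s ^ α) ^ k / Real.Gamma (1 + k * α)) =
        ∫ s in (0 : ℝ)..t, (-1) ^ k / Real.Gamma (1 + k * α) *
          ((t - s) ^ (α - 1) * s ^ (1 + k * α - 1)) := by
      refine intervalIntegral.integral_congr fun s hs => ?_
      rw [uIcc_of_le ht.le] at hs
      rw [hpow s hs.1 k, add_sub_cancel_left]
      ring
    rw [hcongr, intervalIntegral.integral_const_mul,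
      integral_sub_rpow_mul_rpow hα (by positivity) ht, hpow t ht.le]
    have e1 : 1 + (k : ℝ) * α + α - 1 = ((k + 1 : ℕ) : ℝ) * α := by push_cast; ring
    have e2 : 1 + (k : ℝ) * α + α = 1 + ((k + 1 : ℕ) : ℝ) * α := by push_cast; ring
    rw [e1, e2]
    field_simp
    ring
  simp_rw [hterm] at hsum
  have htail := ((hasSum_nat_add_iff' 1).2 (hasSum_mittagLeffler hα (-t ^ α))).mul_left
    (-Real.Gamma α)
  rw [hsum.unique htail]
  simp
  ring

theorem continuous_mittagLeffler_neg_rpow {α : ℝ} (hα : 0 < α) :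
    Continuous fun s : ℝ => mittagLeffler α (-s ^ α) :=
  (continuous_mittagLeffler hα).comp (Real.continuous_rpow_const hα.le).neg

/-- Positivity of `t ↦ E_α(-t^α)`: at a first zero `t₀`, monotonicity of the kernel in the
Volterra equation bounds the function just before `t₀` by a small multiple of itself. -/
theorem mittagLeffler_neg_rpow_pos {α t : ℝ} (hα : 0 < α) (hα1 : α < 1) (ht : 0 ≤ t) :
    0 < mittagLeffler α (-t ^ α) := by
  by_contra! hneg
  set u : ℝ → ℝ := fun s => mittagLeffler α (-s ^ α) with hu
  have hcont : Continuous u := continuous_mittagLeffler_neg_rpow hα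
  have hu0 : u 0 = 1 := by simp [hu, Real.zero_rpow hα.ne', mittagLeffler_zero]
  set Z : Set ℝ := Ici 0 ∩ u ⁻¹' Iic 0
  have hZclosed : IsClosed Z := isClosed_Ici.inter (isClosed_Iic.preimage hcont)
  have hZbdd : BddBelow Z := ⟨0, fun s hs => hs.1⟩
  obtain ⟨hz0, hzu⟩ : sInf Z ∈ Z := hZclosed.csInf_mem ⟨t, ht, hneg⟩ hZbdd
  have hbefore : ∀ s, 0 ≤ s → s < sInf Z → 0 < u s := by
    intro s hs hlt
    by_contra! hle
    exact absurd (csInf_le hZbdd (show s ∈ Z from ⟨hs, hle⟩)) (not_le.2 hlt)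
  generalize sInf Z = z at hz0 hzu hbefore
  simp only [mem_preimage, mem_Iic, mem_Ici] at hz0 hzu
  have hzpos : 0 < z := hz0.lt_of_ne (by rintro rfl; linarith)
  have hΓ : 0 < Real.Gamma α := Real.Gamma_pos_of_pos hα
  obtain ⟨a, ha0, haz, hasmall⟩ :
      ∃ a, 0 < a ∧ a < z ∧ (z - a) ^ α < Real.Gamma α * α := by
    have hlim : Tendsto (fun a : ℝ => (z - a) ^ α) (𝓝[<] z) (𝓝 0) := by
      have : ContinuousAt (fun a : ℝ => (z - a) ^ α) z :=
        ((Real.continuous_rpow_const hα.le).comp (continuous_const.sub continuous_id)).continuousAt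
      have h := this.tendsto
      simp only [sub_self, Real.zero_rpow hα.ne'] at h
      exact h.mono_left nhdsWithin_le_nhds
    obtain ⟨a, h1, h2⟩ := ((hlim.eventually_lt_const (by positivity : 0 < Real.Gamma α * α)).and
      (Ioo_mem_nhdsLT hzpos)).exists
    exact ⟨a, h2.1, h2.2, h1⟩
  obtain ⟨m, ⟨ham, hmz⟩, hmax⟩ :=
    isCompact_Icc.exists_isMaxOn (nonempty_Icc.2 haz.le) hcont.continuousOn
  have hmpos : 0 < u m := (hbefore a ha0.le haz).trans_le (hmax ⟨le_rfl, haz.le⟩)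
  have hmz : m < z := hmz.lt_of_ne (by rintro rfl; linarith)
  have hm0 : 0 < m := ha0.trans_le ham
  have h_int : ∀ c p q, IntervalIntegrable (fun s => (c - s) ^ (α - 1) * u s) volume p q :=
    fun c p q => (intervalIntegrable_sub_rpow hα c p q).mul_continuousOn hcont.continuousOn
  have hVm : ∫ s in (0 : ℝ)..m, (m - s) ^ (α - 1) * u s = Real.Gamma α * (1 - u m) :=
    integral_sub_rpow_mul_mittagLeffler hα hm0
  have hVz : ∫ s in (0 : ℝ)..z, (z - s) ^ (α - 1) * u s = Real.Gamma α * (1 - u z) :=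
    integral_sub_rpow_mul_mittagLeffler hα hzpos
  rw [← intervalIntegral.integral_add_adjacent_intervals (h_int z 0 m) (h_int z m z)] at hVz
  have hhead : ∫ s in (0 : ℝ)..m, (z - s) ^ (α - 1) * u s ≤
      ∫ s in (0 : ℝ)..m, (m - s) ^ (α - 1) * u s := by
    refine intervalIntegral.integral_mono_on_of_le_Ioo hm0.le (h_int z 0 m) (h_int m 0 m)
      fun s hs => ?_
    refine mul_le_mul_of_nonneg_right ?_ (hbefore s hs.1.le (hs.2.trans hmz)).le
    exact Real.rpow_le_rpow_of_nonpos (sub_pos.2 hs.2) (by linarith) (by linarith)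
  have htail : ∫ s in m..z, (z - s) ^ (α - 1) * u s ≤ (z - m) ^ α / α * u m := by
    calc ∫ s in m..z, (z - s) ^ (α - 1) * u s
        ≤ ∫ s in m..z, (z - s) ^ (α - 1) * u m := by
          refine intervalIntegral.integral_mono_on hmz.le (h_int z m z)
            ((intervalIntegrable_sub_rpow hα z m z).mul_const _) fun s hs => ?_
          exact mul_le_mul_of_nonneg_left (hmax ⟨ham.trans hs.1, hs.2⟩)
            (Real.rpow_nonneg (sub_nonneg.2 hs.2) _)
      _ = (z - m) ^ α / α * u m := by
          rw [intervalIntegral.integral_mul_const,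
            intervalIntegral.integral_comp_sub_left (fun s => s ^ (α - 1)),
            integral_rpow (Or.inl (by linarith))]
          simp [Real.zero_rpow hα.ne']
  have hsmall : (z - m) ^ α / α < Real.Gamma α := by
    rw [div_lt_iff₀ hα]
    refine lt_of_le_of_lt ?_ hasmall
    exact Real.rpow_le_rpow (by linarith) (by linarith) hα.le
  nlinarith [mul_lt_mul_of_pos_right hsmall hmpos, mul_nonneg hΓ.le (neg_nonneg.2 hzu)]

theorem mittagLeffler_pos {α : ℝ} (hα : 0 < α) (hα1 : α < 1) (r : ℝ) :
    0 < mittagLeffler α r := by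
  rcases le_total 0 r with hr | hr
  · refine (summable_mittagLeffler hα r).tsum_pos (fun k => ?_) 0 (by simp)
    have := Gamma_one_add_nat_mul_pos hα k
    positivity
  · have h := mittagLeffler_neg_rpow_pos hα hα1 (Real.rpow_nonneg (neg_nonneg.2 hr) α⁻¹)
    rwa [Real.rpow_inv_rpow (neg_nonneg.2 hr) hα.ne', neg_neg] at h

theorem aCoeff_pos (α t x : ℝ) (hα : 0 < α) (hα1 : α < 1) (ht : 0 < t) (hx : 0 < x)
    (k : ℕ) : 0 < aCoeff α t x k := by
  have hcont : Continuous fun ξ : ℝ =>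
      mittagLeffler α ((1 - ξ ^ 2) * t ^ α) * Real.cos (x * ξ) :=
    ((continuous_mittagLeffler hα).comp (by fun_prop)).mul (by fun_prop)
  unfold aCoeff
  split_ifs with hk
  · refine intervalIntegral.intervalIntegral_pos_of_pos_on (hcont.intervalIntegrable _ _)
      (fun ξ hξ => mul_pos (mittagLeffler_pos hα hα1 _) ?_) (by positivity)
    have h2 := (lt_div_iff₀ (by positivity)).1 hξ.2
    have h1 : 0 < x * ξ := mul_pos hx hξ.1
    exact Real.cos_pos_of_mem_Ioo ⟨by linarith [Real.pi_pos], by linarith⟩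
  · rw [← intervalIntegral.integral_const_mul]
    refine intervalIntegral.intervalIntegral_pos_of_pos_on
      ((hcont.const_mul _).intervalIntegrable _ _) (fun ξ hξ => ?_) ?_
    · have h1 := (div_lt_iff₀ (by positivity)).1 hξ.1
      have h2 := (lt_div_iff₀ (by positivity)).1 hξ.2
      rw [mul_left_comm, ← Real.cos_sub_nat_mul_pi]
      exact mul_pos (mittagLeffler_pos hα hα1 _)
        (Real.cos_pos_of_mem_Ioo ⟨by linarith, by linarith⟩)
    · gcongr
      linarith
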